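/- arXiv:1104.4275 — 4 statements merged into one kernel-verified Lean document; each statement's English description precedes it below -/
import Mathlib

section
/- Let (∂ : H → H₀, ξ : H₀ → Aut(H)) be a crossed module of groups, i.e. ∂ is a group homomorphism and ξ an action satisfying ∂(ξ(x)(h)) = x * ∂(h) * x⁻¹ for all x ∈ H₀, h ∈ H (precrossed condition) and ξ(∂ h)(h') = h * h' * h⁻¹ for all h, h' ∈ H (Peiffer condition). Let σ : E → H₀ be a group homomorphism, and let P = {(e, h) ∈ E × H : σ(e) = ∂(h)} (a subgroup of E × H). Then: (1) for each e' ∈ E the map (e,h) ↦ (e' * e * e'⁻¹, ξ(σ e')(h)) is a well-defined automorphism of P, and this defines a group homomorphism ξ̄ : E → Aut(P); (2) the first projection ∂̄ : P → E together with ξ̄ satisfies the precrossed condition ∂̄(ξ̄(e')(p)) = e' * ∂̄(p) * e'⁻¹ and the Peiffer condition ξ̄(∂̄(p))(p') = p * p' * p⁻¹ for all p, p' ∈ P, so (∂̄, ξ̄) is a crossed module of groups; (3) the second projection restricts to a group isomorphism from ker ∂̄ = {(1,h) ∈ P} onto ker ∂. -/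
/-- pulling back a crossed module of groups `(δ : H → H₀, ξ)` along a
homomorphism `σ : E → H₀` yields a crossed module structure on the pullback
`P = {(e,h) : σ e = δ h}` over `E`, with kernel of the projection isomorphic to `ker δ`. -/
theorem crossed_module_pullback_group
    {H H₀ E : Type*} [Group H] [Group H₀] [Group E]
    (δ : H →* H₀) (ξ : H₀ →* MulAut H)
    (hpre : ∀ (x : H₀) (h : H), δ (ξ x h) = x * δ h * x⁻¹)
    (hpeif : ∀ h h' : H, ξ (δ h) h' = h * h' * h⁻¹)
    (σ : E →* H₀) :
    (∃ ξbar : E →* MulAut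
        ((σ.comp (MonoidHom.fst E H)).eqLocus (δ.comp (MonoidHom.snd E H))),
      (∀ (e' : E)
          (p : ((σ.comp (MonoidHom.fst E H)).eqLocus (δ.comp (MonoidHom.snd E H)))),
        ((ξbar e' p : _) : E × H) = (e' * (p : E × H).1 * e'⁻¹, ξ (σ e') (p : E × H).2)) ∧
      (∀ (e' : E) (p : _), ((ξbar e' p : _) : E × H).1 = e' * (p : E × H).1 * e'⁻¹) ∧
      (∀ p p' : ((σ.comp (MonoidHom.fst E H)).eqLocus (δ.comp (MonoidHom.snd E H))),
        ξbar ((p : E × H).1) p' = p * p' * p⁻¹)) ∧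
    Set.BijOn
      (fun p : ((σ.comp (MonoidHom.fst E H)).eqLocus (δ.comp (MonoidHom.snd E H))) =>
        (p : E × H).2)
      {p | (p : E × H).1 = 1} (δ.ker : Set H) := by
  have hmem : ∀ p : E × H, p ∈ (σ.comp (MonoidHom.fst E H)).eqLocus
      (δ.comp (MonoidHom.snd E H)) ↔ σ p.1 = δ p.2 := fun p => Iff.rfl
  have hP : ∀ (e' : E) (p : E × H), σ p.1 = δ p.2 →
      σ (e' * p.1 * e'⁻¹) = δ (ξ (σ e') p.2) := by
    intro e' p hp
    rw [hpre, map_mul, map_mul, map_inv, hp]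
  let f : E → ((σ.comp (MonoidHom.fst E H)).eqLocus (δ.comp (MonoidHom.snd E H))) →
      ((σ.comp (MonoidHom.fst E H)).eqLocus (δ.comp (MonoidHom.snd E H))) :=
    fun e' p => ⟨(e' * (p : E × H).1 * e'⁻¹, ξ (σ e') (p : E × H).2), hP e' p p.2⟩
  have hf1 : ∀ p, f 1 p = p := by
    intro p
    apply Subtype.ext
    apply Prod.ext <;> simp [f]
  have hfm : ∀ a b p, f (a * b) p = f a (f b p) := by
    intro a b p
    apply Subtype.ext
    apply Prod.ext
    · simp [f, mul_assoc]
    · simp [f]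
  let F : E →* MulAut
      ((σ.comp (MonoidHom.fst E H)).eqLocus (δ.comp (MonoidHom.snd E H))) :=
    { toFun := fun e =>
        { toFun := f e
          invFun := f e⁻¹
          left_inv := fun p => by rw [← hfm, inv_mul_cancel, hf1]
          right_inv := fun p => by rw [← hfm, mul_inv_cancel, hf1]
          map_mul' := fun p q => by
            apply Subtype.ext
            apply Prod.ext
            · simp [f, mul_assoc]
            · simp [f] }
      map_one' := MulEquiv.ext hf1
      map_mul' := fun a b => MulEquiv.ext (hfm a b) }
  refine ⟨⟨F, fun _ _ => rfl, fun _ _ => rfl, ?_⟩, ?_, ?_, ?_⟩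
  · intro p p'
    apply Subtype.ext
    apply Prod.ext
    · rfl
    · change ξ (σ (p : E × H).1) (p' : E × H).2 = _
      rw [(hmem p).1 p.2, hpeif]
      rfl
  · intro p hp
    have h := (hmem p).1 p.2
    have hp' : (p : E × H).1 = 1 := hp
    rw [hp', map_one] at h
    exact h.symm
  · intro p hp q hq h
    have hp' : (p : E × H).1 = 1 := hp
    have hq' : (q : E × H).1 = 1 := hq
    exact Subtype.ext (Prod.ext (hp'.trans hq'.symm) h)
  · intro h hh
    have hh' : δ h = 1 := hh
    exact ⟨⟨(1, h), (hmem _).2 (by simp [hh'])⟩, rfl, rfl⟩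
end

section
/- Let (∂_H : H → H₀) and (∂_G : G → G₀) be group homomorphisms, and let p : H → G, p₀ : H₀ → G₀ be group homomorphisms with ∂_G ∘ p = p₀ ∘ ∂_H. Assume: (a) p restricts to a bijection from ker ∂_H onto ker ∂_G; (b) for all y ∈ H₀, if p₀(y) lies in the range of ∂_G then y lies in the range of ∂_H. Then the commutative square is a pullback: for every y ∈ H₀ and g ∈ G with p₀(y) = ∂_G(g), there exists a unique h ∈ H with ∂_H(h) = y and p(h) = g. -/
/-- a morphism of group "crossed-module data" inducing an isomorphism
on kernels and an injection on cokernels yields a pullback square. -/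
theorem weak_equivalence_square_is_pullback_group
    {H H₀ G G₀ : Type*} [Group H] [Group H₀] [Group G] [Group G₀]
    (δH : H →* H₀) (δG : G →* G₀) (p : H →* G) (p₀ : H₀ →* G₀)
    (hcomm : ∀ h, δG (p h) = p₀ (δH h))
    (hker : Set.BijOn p (δH.ker : Set H) (δG.ker : Set G))
    (hcoker : ∀ y : H₀, p₀ y ∈ Set.range δG → y ∈ Set.range δH) :
    ∀ (y : H₀) (g : G), p₀ y = δG g → ∃! h : H, δH h = y ∧ p h = g := by
  intro y g hy
  obtain ⟨x, rfl⟩ := hcoker y ⟨g, hy.symm⟩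
  have hk : (p x)⁻¹ * g ∈ (δG.ker : Set G) := by
    simp [MonoidHom.mem_ker, hcomm, hy]
  obtain ⟨k, hk1, hk2⟩ := hker.surjOn hk
  have hk1' : δH k = 1 := hk1
  refine ⟨x * k, ⟨by simp [hk1'], by simp [hk2]⟩, ?_⟩
  rintro h ⟨h1, h2⟩
  have hm : x⁻¹ * h ∈ (δH.ker : Set H) := by
    simp [MonoidHom.mem_ker, h1]
  have he : x⁻¹ * h = k := hker.injOn hm hk1 (by rw [hk2, map_mul, map_inv, h2])
  rw [← he, mul_inv_cancel_left]
end

section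
/- Let (∂_H : H → H₀, ξ_H) and (∂_G : G → G₀, ξ_G) be crossed modules of groups, and let (p, p₀) be a morphism of crossed modules (∂_G ∘ p = p₀ ∘ ∂_H and p(ξ_H(x)(h)) = ξ_G(p₀ x)(p h)) which is a weak equivalence, i.e.: p restricts to a bijection ker ∂_H → ker ∂_G; for all y ∈ H₀, p₀(y) ∈ range ∂_G implies y ∈ range ∂_H; and for every x ∈ G₀ there exist g ∈ G and y ∈ H₀ with x = ∂_G(g) * p₀(y). Form the semidirect product E_P = G ⋊ H₀ with respect to the action y ↦ ξ_G(p₀ y), i.e. (g,y)*(g',y') = (g * ξ_G(p₀ y)(g'), y*y'). Then: (1) ρ_P : E_P → G₀, (g,y) ↦ ∂_G(g) * p₀(y), is a group homomorphism; (2) ρ_P is surjective; (3) the map j : H → E_P, j(h) = ((p h)⁻¹, ∂_H(h)), is an injective group homomorphism whose range is exactly ker ρ_P. In particular the sequence 1 → H → E_P → G₀ → 1 is exact, so the split butterfly associated to a weak equivalence is flippable. -/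
/-- for a weak equivalence `(p, p₀)` of crossed modules of groups, the
split butterfly it induces is flippable: `ρ_P(g,y) = ∂_G g * p₀ y` is a surjective
homomorphism on the semidirect product `E_P = G ⋊ H₀`, and `j(h) = ((p h)⁻¹, ∂_H h)`
is an injective homomorphism with range `ker ρ_P`. -/
theorem weak_equivalence_split_butterfly_flippable
    {H H₀ G G₀ : Type*} [Group H] [Group H₀] [Group G] [Group G₀]
    (δH : H →* H₀) (ξH : H₀ →* MulAut H)
    (δG : G →* G₀) (ξG : G₀ →* MulAut G)
    (hpreH : ∀ (x : H₀) (h : H), δH (ξH x h) = x * δH h * x⁻¹)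
    (hpeifH : ∀ h h' : H, ξH (δH h) h' = h * h' * h⁻¹)
    (hpreG : ∀ (x : G₀) (g : G), δG (ξG x g) = x * δG g * x⁻¹)
    (hpeifG : ∀ g g' : G, ξG (δG g) g' = g * g' * g⁻¹)
    (p : H →* G) (p₀ : H₀ →* G₀)
    (hcomm : ∀ h, δG (p h) = p₀ (δH h))
    (hequiv : ∀ (x : H₀) (h : H), p (ξH x h) = ξG (p₀ x) (p h))
    (hker : Set.BijOn p (δH.ker : Set H) (δG.ker : Set G))
    (hcoker : ∀ y : H₀, p₀ y ∈ Set.range δG → y ∈ Set.range δH)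
    (hess : ∀ x : G₀, ∃ (g : G) (y : H₀), x = δG g * p₀ y) :
    ∃ ρP : (G ⋊[ξG.comp p₀] H₀) →* G₀,
      (∀ (g : G) (y : H₀), ρP ⟨g, y⟩ = δG g * p₀ y) ∧
      Function.Surjective ρP ∧
      (∀ h h' : H,
        (⟨(p (h * h'))⁻¹, δH (h * h')⟩ : G ⋊[ξG.comp p₀] H₀) =
          (⟨(p h)⁻¹, δH h⟩ : G ⋊[ξG.comp p₀] H₀) * ⟨(p h')⁻¹, δH h'⟩) ∧
      Function.Injective
        (fun h : H => (⟨(p h)⁻¹, δH h⟩ : G ⋊[ξG.comp p₀] H₀)) ∧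
      (∀ x : G ⋊[ξG.comp p₀] H₀,
        x ∈ ρP.ker ↔ ∃ h : H, (⟨(p h)⁻¹, δH h⟩ : G ⋊[ξG.comp p₀] H₀) = x) := by
  refine ⟨MonoidHom.mk' (fun x => δG x.left * p₀ x.right) ?_, ?_, ?_, ?_, ?_, ?_⟩
  · intro a b
    simp [hpreG, mul_assoc]
  · intro g y
    rfl
  · intro x
    obtain ⟨g, y, h⟩ := hess x
    exact ⟨⟨g, y⟩, h.symm⟩
  · intro h h'
    ext
    · simp [← hcomm, hpeifG, mul_assoc]
    · simp
  · intro h h' e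
    have e1 : (p h)⁻¹ = (p h')⁻¹ := congrArg SemidirectProduct.left e
    have e2 : δH h = δH h' := congrArg SemidirectProduct.right e
    have e3 : p h = p h' := inv_injective e1
    have k1 : h * h'⁻¹ ∈ (δH.ker : Set H) := by simp [MonoidHom.mem_ker, e2]
    have k2 : (1 : H) ∈ (δH.ker : Set H) := by simp [MonoidHom.mem_ker]
    have := hker.injOn k1 k2 (by simp [e3])
    exact mul_inv_eq_one.mp this
  · rintro ⟨g, y⟩
    rw [MonoidHom.mem_ker]
    change δG g * p₀ y = 1 ↔ _
    constructor
    · intro e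
      have e1 : p₀ y = (δG g)⁻¹ := eq_inv_of_mul_eq_one_right e
      obtain ⟨h, rfl⟩ := hcoker y ⟨g⁻¹, by simp [e1]⟩
      have k1 : p h * g ∈ (δG.ker : Set G) := by
        simp [MonoidHom.mem_ker, hcomm, e1]
      obtain ⟨k, hk, hk'⟩ := hker.surjOn k1
      have hk2 : δH k = 1 := hk
      refine ⟨k⁻¹ * h, ?_⟩
      ext
      · simp [hk']
      · simp [hk2]
    · rintro ⟨h, e⟩
      have e1 : (p h)⁻¹ = g := congrArg SemidirectProduct.left e
      have e2 : δH h = y := congrArg SemidirectProduct.right e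
      rw [← e1, ← e2, ← hcomm]
      simp
end

section
/- Let (∂_H : H → H₀, ξ_H) and (∂_G : G → G₀, ξ_G) be crossed modules of groups, and let E be a group with homomorphisms κ : H → E, ι : G → E, σ : E → H₀, ρ : E → G₀ forming a butterfly: σ ∘ κ = ∂_H, ρ ∘ ι = ∂_G, ρ(κ h) = 1 for all h, ι is injective with range ι = ker σ, σ is surjective, κ(ξ_H(σ e)(h)) = e * κ(h) * e⁻¹ for all e ∈ E, h ∈ H, and ι(ξ_G(ρ e)(g)) = e * ι(g) * e⁻¹ for all e ∈ E, g ∈ G. Suppose the butterfly is split by a group homomorphism s : H₀ → E with σ(s x) = x for all x. Then there is a unique function F : H → G with ι(F h) = (κ h)⁻¹ * s(∂_H h) for all h, and the pair (F, ρ ∘ s) is a morphism of crossed modules: F is a group homomorphism, ∂_G(F h) = ρ(s(∂_H h)) for all h ∈ H, and F(ξ_H(x)(h)) = ξ_G(ρ(s x))(F h) for all x ∈ H₀, h ∈ H. -/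
/-- a split butterfly between crossed modules of groups determines a
morphism of crossed modules `(F, ρ ∘ s)`, where `F` is the unique map with
`ι (F h) = (κ h)⁻¹ * s (∂_H h)`. -/
theorem split_butterfly_gives_crossed_module_morphism
    {H H₀ G G₀ E : Type*} [Group H] [Group H₀] [Group G] [Group G₀] [Group E]
    (δH : H →* H₀) (ξH : H₀ →* MulAut H)
    (δG : G →* G₀) (ξG : G₀ →* MulAut G)
    (hpreH : ∀ (x : H₀) (h : H), δH (ξH x h) = x * δH h * x⁻¹)
    (hpeifH : ∀ h h' : H, ξH (δH h) h' = h * h' * h⁻¹)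
    (hpreG : ∀ (x : G₀) (g : G), δG (ξG x g) = x * δG g * x⁻¹)
    (hpeifG : ∀ g g' : G, ξG (δG g) g' = g * g' * g⁻¹)
    (κ : H →* E) (ι : G →* E) (σ : E →* H₀) (ρ : E →* G₀)
    (hσκ : ∀ h, σ (κ h) = δH h)
    (hρι : ∀ g, ρ (ι g) = δG g)
    (hρκ : ∀ h, ρ (κ h) = 1)
    (hιinj : Function.Injective ι) (hιker : ι.range = σ.ker)
    (hσsurj : Function.Surjective σ)
    (hκconj : ∀ (e : E) (h : H), κ (ξH (σ e) h) = e * κ h * e⁻¹)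
    (hιconj : ∀ (e : E) (g : G), ι (ξG (ρ e) g) = e * ι g * e⁻¹)
    (s : H₀ →* E) (hs : ∀ x, σ (s x) = x) :
    (∃! F : H → G, ∀ h, ι (F h) = (κ h)⁻¹ * s (δH h)) ∧
    (∀ F : H → G, (∀ h, ι (F h) = (κ h)⁻¹ * s (δH h)) →
      (∀ h h', F (h * h') = F h * F h') ∧
      (∀ h, δG (F h) = ρ (s (δH h))) ∧
      (∀ (x : H₀) (h : H), F (ξH x h) = ξG (ρ (s x)) (F h))) := by
  have hex : ∀ h, ∃ g, ι g = (κ h)⁻¹ * s (δH h) := by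
    intro h
    have hm : (κ h)⁻¹ * s (δH h) ∈ σ.ker := by
      rw [MonoidHom.mem_ker, map_mul, map_inv, hσκ, hs, inv_mul_cancel]
    rw [← hιker] at hm
    exact hm
  refine ⟨?_, ?_⟩
  · choose F hF using hex
    refine ⟨F, hF, ?_⟩
    intro F' hF'
    funext h
    exact hιinj ((hF' h).trans (hF h).symm)
  · intro F hF
    refine ⟨?_, ?_, ?_⟩
    · intro h h'
      apply hιinj
      have h1 : σ (ι (F h)) = 1 := by
        rw [hF, map_mul, map_inv, hσκ, hs, inv_mul_cancel]
      have h2 := hκconj (ι (F h)) h'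
      rw [h1, map_one, MulAut.one_apply] at h2
      have h3 : κ h' * ι (F h) = ι (F h) * κ h' := eq_mul_inv_iff_mul_eq.mp h2
      have h4 : (κ h')⁻¹ * ι (F h) = ι (F h) * (κ h')⁻¹ := by
        rw [inv_mul_eq_iff_eq_mul, ← mul_assoc, h3, mul_inv_cancel_right]
      rw [map_mul, hF (h * h'), hF h', ← mul_assoc, ← h4, hF h]
      simp only [map_mul, mul_inv_rev, mul_assoc]
    · intro h
      rw [← hρι, hF, map_mul, map_inv, hρκ, inv_one, one_mul]
    · intro x h
      apply hιinj
      have h1 := hκconj (s x) h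
      rw [hs] at h1
      rw [hF, hιconj, hF, h1, hpreH]
      simp only [map_mul, map_inv]
      group
end
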